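/- Assume 0 ≤ h < H and M ∈ [h|Ω|, H|Ω|]. Set Θ := Θ(h,H,M), α := (H−h)·Θ and A := (H|Ω| − M)/(H−h), and suppose A < |Ω|. Then 0 < α ≤ ᾱ(A), where ᾱ(A) is the unique positive real number satisfying Λ(ᾱ(A), A) = ᾱ(A); moreover α = ᾱ(A) if and only if h = 0. -/

import Mathlib

open MeasureTheory ENNReal

noncomputable section

/-- The Euclidean Laplacian `Δu` of a function `u : ℝⁿ → ℝ`. -/
def lap {n : ℕ} (u : EuclideanSpace ℝ (Fin n) → ℝ) (x : EuclideanSpace ℝ (Fin n)) : ℝ :=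
  ∑ i : Fin n, iteratedFDeriv ℝ 2 u x ![EuclideanSpace.single i 1, EuclideanSpace.single i 1]

/-- Smooth compactly supported test functions on `Ω`, not identically zero. -/
def TestFun {n : ℕ} (Ω : Set (EuclideanSpace ℝ (Fin n)))
    (u : EuclideanSpace ℝ (Fin n) → ℝ) : Prop :=
  ContDiff ℝ (⊤ : ℕ∞) u ∧ HasCompactSupport u ∧ tsupport u ⊆ Ω ∧ u ≠ 0

/-- The generalized composite plate eigenvalue
`Λ(α,A) = inf_S inf_u (∫_Ω (Δu)² + α ∫_S u²) / ∫_Ω u²`,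
the infima being over measurable `S ⊆ Ω` with `|S| = A` and over smooth compactly
supported `u : Ω → ℝ`, `u ≢ 0`. -/
def Lam {n : ℕ} (Ω : Set (EuclideanSpace ℝ (Fin n))) (α A : ℝ) : ℝ :=
  sInf { r : ℝ | ∃ S : Set (EuclideanSpace ℝ (Fin n)), MeasurableSet S ∧ S ⊆ Ω ∧
      volume S = ENNReal.ofReal A ∧
      ∃ u : EuclideanSpace ℝ (Fin n) → ℝ, TestFun Ω u ∧
        r = ((∫ x in Ω, lap u x ^ 2) + α * ∫ x in S, u x ^ 2) / ∫ x in Ω, u x ^ 2 }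

/-- The class `P` of admissible densities on `Ω`:
`h ≤ ρ ≤ H` a.e. in `Ω`, `ρ > 0` a.e. in `Ω`, and `∫_Ω ρ = M`. -/
def Admissible {n : ℕ} (Ω : Set (EuclideanSpace ℝ (Fin n))) (h H M : ℝ)
    (ρ : EuclideanSpace ℝ (Fin n) → ℝ) : Prop :=
  Measurable ρ ∧ (∀ᵐ x ∂volume.restrict Ω, h ≤ ρ x ∧ ρ x ≤ H ∧ 0 < ρ x) ∧
    (∫ x in Ω, ρ x) = M

/-- The composite plate eigenvalue
`Θ(h,H,M) = inf_{ρ ∈ P} inf_u ∫_Ω (Δu)² / ∫_Ω ρ u²`,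
the inner infimum being over smooth compactly supported `u : Ω → ℝ`, `u ≢ 0`. -/
def Theta {n : ℕ} (Ω : Set (EuclideanSpace ℝ (Fin n))) (h H M : ℝ) : ℝ :=
  sInf { r : ℝ | ∃ ρ : EuclideanSpace ℝ (Fin n) → ℝ, Admissible Ω h H M ρ ∧
      ∃ u : EuclideanSpace ℝ (Fin n) → ℝ, TestFun Ω u ∧
        r = (∫ x in Ω, lap u x ^ 2) / ∫ x in Ω, ρ x * u x ^ 2 }

/-!
For fixed `A`, the function `Λ(·, A)` is an infimum of nondecreasing affine functions, hence
monotone and concave on `[0, ∞)`, and the Poincaré inequality `l ∫ u² ≤ ∫ (Δu)²` gives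
`Λ(0, A) > 0`. Monotonicity makes the greatest `a ≥ 0` with `a ≤ Λ(a, A)` a fixed point, and
concavity makes it the only positive one; this is `ᾱ(A)`.

By the bathtub principle the two-phase densities `H - (H - h) 1_S` with `|S| = A` are the extremal
ones, so `Θ` is the largest `b ≥ 0` such that `b (H ∫_Ω u² - (H - h) ∫_S u²) ≤ ∫_Ω (Δu)²` for all
such `S` and all test functions `u`. (When `h = 0` these densities vanish on `S` and are only limits
of admissible ones.) Since `a ≤ Λ(a, A)` means `a (∫_Ω u² - ∫_S u²) ≤ ∫_Ω (Δu)²` for all `S` and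
`u`, comparing the two conditions gives `HΘ ≤ ᾱ(A)`, with equality if `h = 0`. The theorem follows
from `α = HΘ - hΘ` and `Θ > 0`.
-/

open Set Filter Topology

section FixedPoint

lemma exists_fixedPoint_isGreatest_le_map {α : Type*} [ConditionallyCompleteLattice α] {f : α → α}
    {x₀ : α} (hf : MonotoneOn f (Ici x₀)) (hx₀ : x₀ ≤ f x₀)
    (hbdd : BddAbove {x | x₀ ≤ x ∧ x ≤ f x}) :
    ∃ a, f a = a ∧ IsGreatest {x | x₀ ≤ x ∧ x ≤ f x} a := by
  set s := {x | x₀ ≤ x ∧ x ≤ f x}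
  have hge : x₀ ≤ sSup s := le_csSup hbdd ⟨le_rfl, hx₀⟩
  have hle : sSup s ≤ f (sSup s) := csSup_le ⟨x₀, le_rfl, hx₀⟩ fun x hx =>
    hx.2.trans (hf hx.1 hge (le_csSup hbdd hx))
  have hmap : f (sSup s) ∈ s := ⟨hge.trans hle, hf hge (hge.trans hle) hle⟩
  exact ⟨sSup s, (le_csSup hbdd hmap).antisymm hle, ⟨hge, hle⟩, fun x hx => le_csSup hbdd hx⟩

lemma eq_of_concaveOn_of_map_eq_self {f : ℝ → ℝ} (hf : ConcaveOn ℝ (Ici 0) f) (h0 : 0 < f 0)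
    {a b : ℝ} (ha : 0 < a) (hb : 0 < b) (hfa : f a = a) (hfb : f b = b) : a = b := by
  wlog hab : a ≤ b generalizing a b
  · exact (this hb ha hfb hfa (le_of_not_ge hab)).symm
  refine hab.eq_of_not_lt fun hlt => ?_
  have hab1 : 0 < 1 - a / b := sub_pos.2 ((div_lt_one hb).2 hlt)
  have hconc := hf.2 (x := 0) (y := b) self_mem_Ici hb.le hab1.le (div_pos ha hb).le (by ring)
  simp only [smul_eq_mul, mul_zero, zero_add, div_mul_cancel₀ a hb.ne', hfa, hfb] at hconc
  linarith [mul_pos hab1 h0]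

end FixedPoint

section Bathtub

variable {X : Type*} [MeasurableSpace X] {μ : Measure X}

lemma exists_measure_Iio_le_le_measure_Iic (ν : Measure ℝ) [IsFiniteMeasure ν] {m : ℝ≥0∞}
    (hm0 : 0 < m) (hm : m < ν univ) : ∃ t, ν (Iio t) ≤ m ∧ m ≤ ν (Iic t) := by
  set s := {t | m ≤ ν (Iic t)}
  have hne : s.Nonempty :=
    (((tendsto_measure_Iic_atTop ν).eventually_const_lt hm).exists).imp fun _ => le_of_lt
  have hbdd : BddBelow s := by
    have hlim : Tendsto (fun t => ν (Iic t)) atBot (𝓝 0) := by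
      have hinter : ⋂ t : ℝ, Iic t = ∅ := iInter_Iic_eq_empty_iff.2 (by simp)
      rw [← measure_empty (μ := ν), ← hinter]
      exact tendsto_measure_iInter_atBot (fun _ => measurableSet_Iic.nullMeasurableSet)
        (fun _ _ hab => Iic_subset_Iic.2 hab) ⟨0, measure_ne_top ν _⟩
    obtain ⟨t, ht⟩ := (hlim.eventually_lt_const hm0).exists
    exact ⟨t, fun r hr => le_of_not_gt fun hrt =>
      (hr.trans (measure_mono (Iic_subset_Iic.2 hrt.le))).not_gt ht⟩
  refine ⟨sInf s, ?_, ?_⟩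
  · obtain ⟨u, hu, hlt, hlim⟩ := exists_seq_strictMono_tendsto (sInf s)
    rw [← iUnion_Iic_eq_Iio_of_lt_of_tendsto hlt hlim,
      Monotone.measure_iUnion fun _ _ hij => Iic_subset_Iic.2 (hu.monotone hij)]
    exact iSup_le fun k => le_of_not_ge fun hk => (csInf_le hbdd hk).not_gt (hlt k)
  · have hlim := tendsto_measure_biInter_gt (μ := ν) (s := Iic) (a := sInf s)
      (fun _ _ => measurableSet_Iic.nullMeasurableSet)
      (fun _ _ _ hij => Iic_subset_Iic.2 hij) ⟨sInf s + 1, by simp, measure_ne_top ν _⟩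
    have hinter : ⋂ r > sInf s, Iic r = Iic (sInf s) := by
      ext x
      simp only [mem_iInter, mem_Iic, gt_iff_lt, forall_gt_imp_ge_iff_le_of_dense]
    rw [hinter] at hlim
    refine ge_of_tendsto hlim (eventually_mem_nhdsWithin.mono fun r hr => ?_)
    obtain ⟨t, ht, htr⟩ := exists_lt_of_csInf_lt hne hr
    exact ht.trans (measure_mono (Iic_subset_Iic.2 htr.le))

lemma exists_measure_lt_le_le_measure_le [IsFiniteMeasure μ] {f : X → ℝ} (hf : Measurable f)
    {m : ℝ≥0∞} (hm0 : 0 < m) (hm : m < μ univ) :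
    ∃ t, μ {x | f x < t} ≤ m ∧ m ≤ μ {x | f x ≤ t} := by
  obtain ⟨t, hlt, hle⟩ := exists_measure_Iio_le_le_measure_Iic (μ.map f) hm0
    (by rwa [Measure.map_apply hf .univ])
  rw [Measure.map_apply hf measurableSet_Iio] at hlt
  rw [Measure.map_apply hf measurableSet_Iic] at hle
  exact ⟨t, hlt, hle⟩

/-- A measure is divisible if every measurable set `s` contains measurable subsets of every
measure below `μ s`. For finite measures this is Sierpiński's characterization of the absence
of atoms. -/
def Divisible (μ : Measure X) : Prop :=
  ∀ ⦃s⦄, MeasurableSet s → ∀ m ≤ μ s, ∃ t ⊆ s, MeasurableSet t ∧ μ t = m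

lemma divisible_of_null_fibers [IsFiniteMeasure μ] {f : X → ℝ} (hf : Measurable f)
    (hnull : ∀ c, μ {x | f x = c} = 0) : Divisible μ := by
  intro s hs m hm
  rcases eq_zero_or_pos m with rfl | hm0
  · exact ⟨∅, empty_subset s, .empty, measure_empty⟩
  rcases hm.eq_or_lt with rfl | hm
  · exact ⟨s, subset_rfl, hs, rfl⟩
  obtain ⟨t, hlt, hle⟩ := exists_measure_lt_le_le_measure_le (μ := μ.restrict s) hf hm0
    (by rwa [Measure.restrict_apply_univ])
  have hlt_ae_le : {x | f x < t} =ᵐ[μ] {x | f x ≤ t} := by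
    filter_upwards [measure_eq_zero_iff_ae_notMem.1 (hnull t)] with x hx
    exact propext (Ne.le_iff_lt hx).symm
  have hmeas : MeasurableSet {x | f x < t} := hf measurableSet_Iio
  refine ⟨{x | f x < t} ∩ s, inter_subset_right, hmeas.inter hs, ?_⟩
  rw [← Measure.restrict_apply hmeas]
  exact hlt.antisymm (hle.trans_eq (measure_congr (ae_restrict_of_ae hlt_ae_le)).symm)

lemma Divisible.exists_sublevel_measure_eq [IsFiniteMeasure μ] (hμ : Divisible μ) {f : X → ℝ}
    (hf : Measurable f) {m : ℝ≥0∞} (hm0 : 0 < m) (hm : m < μ univ) :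
    ∃ s t, MeasurableSet s ∧ μ s = m ∧ (∀ x ∈ s, f x ≤ t) ∧ ∀ x ∉ s, t ≤ f x := by
  obtain ⟨t, hlt, hle⟩ := exists_measure_lt_le_le_measure_le hf hm0 hm
  have hmeas_lt : MeasurableSet {x | f x < t} := hf measurableSet_Iio
  have hmeas_eq : MeasurableSet {x | f x = t} := hf (measurableSet_singleton t)
  have hdisj : Disjoint {x | f x < t} {x | f x = t} :=
    disjoint_left.2 fun _ hx hxt => (ne_of_lt hx) hxt
  have hrest : m - μ {x | f x < t} ≤ μ {x | f x = t} := by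
    rw [tsub_le_iff_left, ← measure_union hdisj hmeas_eq]
    exact hle.trans (measure_mono fun _ hx => lt_or_eq_of_le (mem_ofPred.1 hx))
  obtain ⟨s, hst, hs, hμs⟩ := hμ hmeas_eq _ hrest
  refine ⟨{x | f x < t} ∪ s, t, hmeas_lt.union hs, ?_, ?_, ?_⟩
  · rw [measure_union (hdisj.mono_right hst) hs, hμs, add_tsub_cancel_of_le hlt]
  · rintro x (hx | hx)
    exacts [le_of_lt hx, (hst hx).le]
  · exact fun x hx => le_of_not_gt fun hlt => hx (.inl hlt)

lemma integrable_mul_of_ae_mem_Icc {f φ : X → ℝ} {c : ℝ} (hf : Integrable f μ)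
    (hφ : AEStronglyMeasurable φ μ) (hφc : ∀ᵐ x ∂μ, φ x ∈ Icc 0 c) :
    Integrable (fun x => φ x * f x) μ :=
  hf.bdd_mul hφ (hφc.mono fun _ hx => (Real.norm_of_nonneg hx.1).trans_le hx.2)

lemma setIntegral_sublevel_le_integral_mul [IsFiniteMeasure μ] {f φ : X → ℝ} {s : Set X} {t : ℝ}
    (hf : Integrable f μ) (hφ : AEStronglyMeasurable φ μ) (hφ01 : ∀ᵐ x ∂μ, φ x ∈ Icc 0 1)
    (hs : MeasurableSet s) (hst : ∀ x ∈ s, f x ≤ t) (hts : ∀ x ∉ s, t ≤ f x)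
    (hμs : μ.real s = ∫ x, φ x ∂μ) :
    ∫ x in s, f x ∂μ ≤ ∫ x, φ x * f x ∂μ := by
  have hφf := integrable_mul_of_ae_mem_Icc hf hφ hφ01
  have hφi : Integrable φ μ := by
    simpa using integrable_mul_of_ae_mem_Icc (integrable_const (1 : ℝ)) hφ hφ01
  have hχ : Integrable (s.indicator (1 : X → ℝ)) μ := (integrable_const 1).indicator hs
  have hsub_f : Integrable (fun x => φ x * f x - s.indicator f x) μ := hφf.sub (hf.indicator hs)
  have hsub_χ : Integrable (fun x => φ x - s.indicator 1 x) μ := hφi.sub hχ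
  have hpos : 0 ≤ ∫ x, (φ x * f x - s.indicator f x) - t * (φ x - s.indicator 1 x) ∂μ := by
    refine integral_nonneg_of_ae (hφ01.mono fun x hx => ?_)
    by_cases hxs : x ∈ s
    · simp only [indicator_of_mem hxs, Pi.zero_apply, Pi.one_apply]
      linarith [mul_nonneg (sub_nonneg.2 hx.2) (sub_nonneg.2 (hst x hxs))]
    · simp only [indicator_of_notMem hxs, Pi.zero_apply]
      linarith [mul_nonneg hx.1 (sub_nonneg.2 (hts x hxs))]
  rw [integral_sub hsub_f (hsub_χ.const_mul t), integral_const_mul,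
    integral_sub hφf (hf.indicator hs), integral_sub hφi hχ, integral_indicator hs,
    integral_indicator_one hs, hμs] at hpos
  linarith

lemma Divisible.exists_setIntegral_le_integral_mul [IsFiniteMeasure μ] (hμ : Divisible μ)
    {f φ : X → ℝ} (hfm : Measurable f) (hf : Integrable f μ) (hφ : AEStronglyMeasurable φ μ)
    (hφ01 : ∀ᵐ x ∂μ, φ x ∈ Icc 0 1) :
    ∃ s, MeasurableSet s ∧ μ.real s = ∫ x, φ x ∂μ ∧ ∫ x in s, f x ∂μ ≤ ∫ x, φ x * f x ∂μ := by
  have hφi : Integrable φ μ := by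
    simpa using integrable_mul_of_ae_mem_Icc (integrable_const (1 : ℝ)) hφ hφ01
  have hφ0 : 0 ≤ᵐ[μ] φ := hφ01.mono fun _ hx => hx.1
  have hφ1 : 0 ≤ᵐ[μ] 1 - φ := hφ01.mono fun _ hx => sub_nonneg.2 hx.2
  have hsub : ∫ x, (1 - φ) x ∂μ = μ.real univ - ∫ x, φ x ∂μ := by
    simp [integral_sub (integrable_const (1 : ℝ)) hφi]
  rcases (integral_nonneg_of_ae hφ0).eq_or_lt with h0 | h0
  · have hφ_zero := (integral_eq_zero_iff_of_nonneg_ae hφ0 hφi).1 h0.symm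
    refine ⟨∅, .empty, by simpa using h0, ?_⟩
    rw [setIntegral_empty, integral_eq_zero_of_ae (hφ_zero.mono fun x hx => by simp [hx])]
  rcases (hsub ▸ integral_nonneg_of_ae hφ1 : 0 ≤ μ.real univ - ∫ x, φ x ∂μ).eq_or_lt with h1 | h1
  · have hφ_one := (integral_eq_zero_iff_of_nonneg_ae hφ1
      ((integrable_const (1 : ℝ)).sub hφi)).1 (hsub.trans h1.symm)
    refine ⟨univ, .univ, by linarith, (setIntegral_univ.trans (integral_congr_ae ?_)).le⟩
    filter_upwards [hφ_one] with x hx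
    rw [← sub_eq_zero.1 hx, Pi.one_apply, one_mul]
  obtain ⟨s, t, hs, hμs, hst, hts⟩ := hμ.exists_sublevel_measure_eq hfm
    (m := ENNReal.ofReal (∫ x, φ x ∂μ)) (ofReal_pos.2 h0)
    ((ofReal_lt_iff_lt_toReal h0.le (measure_ne_top μ univ)).2 (sub_pos.1 h1))
  have hμs_real : μ.real s = ∫ x, φ x ∂μ := by rw [Measure.real, hμs, toReal_ofReal h0.le]
  exact ⟨s, hs, hμs_real,
    setIntegral_sublevel_le_integral_mul hf hφ hφ01 hs hst hts hμs_real⟩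

lemma divisible_of_absolutelyContinuous_addHaar {E : Type*} [NormedAddCommGroup E]
    [NormedSpace ℝ E] [FiniteDimensional ℝ E] [Nontrivial E] [MeasurableSpace E] [BorelSpace E]
    {μ ν : Measure E} [μ.IsAddHaarMeasure] [IsFiniteMeasure ν] (hν : ν ≪ μ) : Divisible ν :=
  divisible_of_null_fibers measurable_norm fun c => hν <| by
    simpa [Metric.sphere, dist_zero_right] using Measure.addHaar_sphere μ (0 : E) c

end Bathtub

section Poincare

variable {E : Type*} [NormedAddCommGroup E] [MeasurableSpace E] [BorelSpace E] {u : E → ℝ}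

lemma integrable_sq_of_hasCompactSupport {μ : Measure E} [IsFiniteMeasureOnCompacts μ]
    (hu : Continuous u) (hc : HasCompactSupport u) : Integrable (fun x => u x ^ 2) μ := by
  simp only [pow_two]
  exact (hu.mul hu).integrable_of_hasCompactSupport hc.mul_right

variable [NormedSpace ℝ E] [FiniteDimensional ℝ E] {μ : Measure E} [μ.IsAddHaarMeasure]

lemma integral_mul_fderiv_fderiv_eq_neg_integral_fderiv_sq (hu : ContDiff ℝ 2 u)
    (hc : HasCompactSupport u) (v : E) :
    ∫ x, u x * fderiv ℝ (fun y => fderiv ℝ u y v) x v ∂μ = -∫ x, fderiv ℝ u x v ^ 2 ∂μ := by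
  have hdu : ContDiff ℝ 1 (fun x => fderiv ℝ u x v) :=
    (hu.fderiv_right (by norm_num)).clm_apply contDiff_const
  have hddu : Continuous fun x => fderiv ℝ (fun y => fderiv ℝ u y v) x v :=
    (hdu.continuous_fderiv one_ne_zero).clm_apply continuous_const
  simp only [pow_two]
  refine integral_mul_fderiv_eq_neg_fderiv_mul_of_integrable ?_ ?_ ?_
    (fun x _ => hu.differentiable two_ne_zero x) (fun x _ => hdu.differentiable one_ne_zero x)
  · exact (hdu.continuous.mul hdu.continuous).integrable_of_hasCompactSupport
      (hc.fderiv_apply (𝕜 := ℝ) v).mul_right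
  · exact (hu.continuous.mul hddu).integrable_of_hasCompactSupport hc.mul_right
  · exact (hu.continuous.mul hdu.continuous).integrable_of_hasCompactSupport hc.mul_right

lemma integral_sq_eq_neg_integral_clm_mul (hu : ContDiff ℝ 1 u) (hc : HasCompactSupport u)
    (ℓ : E →L[ℝ] ℝ) {v : E} (hℓ : ℓ v = 1) :
    ∫ x, u x ^ 2 ∂μ = -∫ x, ℓ x * (2 * u x * fderiv ℝ u x v) ∂μ := by
  have hdu : Continuous fun x => fderiv ℝ u x v :=
    (hu.continuous_fderiv one_ne_zero).clm_apply continuous_const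
  have hu_diff := hu.differentiable one_ne_zero
  have hderiv (x : E) : fderiv ℝ (fun y => u y ^ 2) x v = 2 * u x * fderiv ℝ u x v := by
    rw [fderiv_fun_pow 2 (hu_diff x)]
    simp [mul_assoc]
  have hℓ_deriv (x : E) : fderiv ℝ ℓ x v = 1 := by rw [ℓ.fderiv, hℓ]
  have hparts := integral_mul_fderiv_eq_neg_fderiv_mul_of_integrable (μ := μ) (f := ℓ)
    (g := fun x => u x ^ 2) (v := v) ?_ ?_ ?_ (fun x _ => ℓ.differentiableAt)
    (fun x _ => (hu_diff x).pow 2)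
  · simp only [hderiv, hℓ_deriv, one_mul] at hparts
    linarith
  · simpa only [hℓ_deriv, one_mul] using integrable_sq_of_hasCompactSupport hu.continuous hc
  · simp only [hderiv]
    exact (ℓ.continuous.mul ((continuous_const.mul hu.continuous).mul
      hdu)).integrable_of_hasCompactSupport hc.mul_left.mul_right.mul_left
  · simp only [pow_two]
    exact (ℓ.continuous.mul (hu.continuous.mul hu.continuous)).integrable_of_hasCompactSupport
      hc.mul_right.mul_left

lemma integral_sq_le_integral_fderiv_sq (hu : ContDiff ℝ 1 u) (hc : HasCompactSupport u)
    (ℓ : E →L[ℝ] ℝ) {v : E} (hℓ : ℓ v = 1) {R : ℝ} (hR : ∀ x ∈ tsupport u, |ℓ x| ≤ R) :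
    ∫ x, u x ^ 2 ∂μ ≤ 4 * R ^ 2 * ∫ x, fderiv ℝ u x v ^ 2 ∂μ := by
  have hdu : Continuous fun x => fderiv ℝ u x v :=
    (hu.continuous_fderiv one_ne_zero).clm_apply continuous_const
  have hu_sq : Integrable (fun x => u x ^ 2) μ :=
    integrable_sq_of_hasCompactSupport hu.continuous hc
  have hdu_sq : Integrable (fun x => fderiv ℝ u x v ^ 2) μ :=
    integrable_sq_of_hasCompactSupport hdu (hc.fderiv_apply (𝕜 := ℝ) v)
  have hcross : Integrable (fun x => ℓ x * (2 * u x * fderiv ℝ u x v)) μ :=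
    (ℓ.continuous.mul ((continuous_const.mul hu.continuous).mul
      hdu)).integrable_of_hasCompactSupport hc.mul_left.mul_right.mul_left
  have hpointwise (x : E) : -(ℓ x * (2 * u x * fderiv ℝ u x v)) ≤
      1 / 2 * u x ^ 2 + 2 * R ^ 2 * fderiv ℝ u x v ^ 2 := by
    by_cases hx : x ∈ tsupport u
    · have hℓR : ℓ x ^ 2 ≤ R ^ 2 := sq_le_sq.2 ((hR x hx).trans (le_abs_self R))
      nlinarith [sq_nonneg (u x + 2 * (ℓ x * fderiv ℝ u x v)),
        mul_le_mul_of_nonneg_right hℓR (sq_nonneg (fderiv ℝ u x v))]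
    · rw [image_eq_zero_of_notMem_tsupport hx]
      simp only [mul_zero, zero_mul, neg_zero]
      positivity
  have hhalf : ∫ x, u x ^ 2 ∂μ ≤
      1 / 2 * ∫ x, u x ^ 2 ∂μ + 2 * R ^ 2 * ∫ x, fderiv ℝ u x v ^ 2 ∂μ :=
    calc ∫ x, u x ^ 2 ∂μ = ∫ x, -(ℓ x * (2 * u x * fderiv ℝ u x v)) ∂μ := by
          rw [integral_sq_eq_neg_integral_clm_mul hu hc ℓ hℓ, integral_neg]
      _ ≤ ∫ x, (1 / 2 * u x ^ 2 + 2 * R ^ 2 * fderiv ℝ u x v ^ 2) ∂μ :=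
          integral_mono hcross.neg ((hu_sq.const_mul _).add (hdu_sq.const_mul _)) hpointwise
      _ = _ := by
          rw [integral_add (hu_sq.const_mul _) (hdu_sq.const_mul _), integral_const_mul,
            integral_const_mul]
  linarith

end Poincare

section Laplacian

variable {n : ℕ} {u : EuclideanSpace ℝ (Fin n) → ℝ}

lemma lap_eq_sum_fderiv_fderiv (hu : ContDiff ℝ 2 u) (x : EuclideanSpace ℝ (Fin n)) :
    lap u x = ∑ i, fderiv ℝ (fun y => fderiv ℝ u y (EuclideanSpace.single i 1)) x
      (EuclideanSpace.single i 1) := by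
  have hdu : DifferentiableAt ℝ (fderiv ℝ u) x :=
    (hu.fderiv_right (m := 1) (by norm_num)).differentiable one_ne_zero x
  refine Finset.sum_congr rfl fun i _ => ?_
  rw [iteratedFDeriv_two_apply, fderiv_clm_apply hdu (differentiableAt_const _)]
  simp

lemma continuous_lap (hu : ContDiff ℝ 2 u) : Continuous (lap u) :=
  continuous_finsetSum _ fun _ _ =>
    (continuous_eval_const _).comp (hu.continuous_iteratedFDeriv (m := 2) le_rfl)

lemma lap_eq_zero_of_notMem_tsupport {x : EuclideanSpace ℝ (Fin n)} (hx : x ∉ tsupport u) :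
    lap u x = 0 := by
  have hzero : iteratedFDeriv ℝ 2 u x = 0 :=
    Function.notMem_support.1 fun h => hx (support_iteratedFDeriv_subset 2 h)
  simp [lap, hzero]

lemma integrable_lap_sq (hu : ContDiff ℝ 2 u) (hc : HasCompactSupport u) :
    Integrable fun x => lap u x ^ 2 :=
  integrable_sq_of_hasCompactSupport (continuous_lap hu)
    (hc.mono' fun _ hx => not_imp_comm.1 lap_eq_zero_of_notMem_tsupport hx)

lemma sum_integral_fderiv_sq_eq_neg_integral_mul_lap (hu : ContDiff ℝ 2 u)
    (hc : HasCompactSupport u) :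
    ∑ i, ∫ x, fderiv ℝ u x (EuclideanSpace.single i 1) ^ 2 = -∫ x, u x * lap u x := by
  have hint (i : Fin n) : Integrable fun x => u x *
      fderiv ℝ (fun y => fderiv ℝ u y (EuclideanSpace.single i 1)) x
        (EuclideanSpace.single i 1) := by
    have hdu : ContDiff ℝ 1 (fun x => fderiv ℝ u x (EuclideanSpace.single i 1)) :=
      (hu.fderiv_right (by norm_num)).clm_apply contDiff_const
    exact (hu.continuous.mul ((hdu.continuous_fderiv one_ne_zero).clm_apply
      continuous_const)).integrable_of_hasCompactSupport hc.mul_right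
  simp only [lap_eq_sum_fderiv_fderiv hu, Finset.mul_sum]
  rw [integral_finsetSum _ fun i _ => hint i, ← Finset.sum_neg_distrib]
  refine Finset.sum_congr rfl fun i _ => ?_
  rw [integral_mul_fderiv_fderiv_eq_neg_integral_fderiv_sq hu hc, neg_neg]

lemma integral_sq_le_integral_lap_sq (hu : ContDiff ℝ 2 u) (hc : HasCompactSupport u) {i : Fin n}
    {R : ℝ} (hR : ∀ x ∈ tsupport u, |x i| ≤ R) :
    ∫ x, u x ^ 2 ≤ 16 * R ^ 4 * ∫ x, lap u x ^ 2 := by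
  have hu_sq : Integrable fun x => u x ^ 2 := integrable_sq_of_hasCompactSupport hu.continuous hc
  have hlap_sq := integrable_lap_sq hu hc
  have hgrad : ∫ x, u x ^ 2 ≤
      4 * R ^ 2 * ∫ x, fderiv ℝ u x (EuclideanSpace.single i 1) ^ 2 :=
    integral_sq_le_integral_fderiv_sq (hu.of_le one_le_two) hc
      (EuclideanSpace.proj i) (by simp) hR
  have hgreen : ∫ x, fderiv ℝ u x (EuclideanSpace.single i 1) ^ 2 ≤ -∫ x, u x * lap u x :=
    (Finset.single_le_sum (f := fun j => ∫ x, fderiv ℝ u x (EuclideanSpace.single j 1) ^ 2)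
      (fun j _ => integral_nonneg fun x => sq_nonneg _) (Finset.mem_univ i)).trans_eq
      (sum_integral_fderiv_sq_eq_neg_integral_mul_lap hu hc)
  have hyoung : 4 * R ^ 2 * -∫ x, u x * lap u x ≤
      1 / 2 * (∫ x, u x ^ 2) + 8 * R ^ 4 * ∫ x, lap u x ^ 2 := by
    rw [← integral_neg, ← integral_const_mul, ← integral_const_mul, ← integral_const_mul,
      ← integral_add (hu_sq.const_mul _) (hlap_sq.const_mul _)]
    refine integral_mono (Integrable.const_mul (Integrable.neg ?_) _)
      ((hu_sq.const_mul _).add (hlap_sq.const_mul _)) fun x => ?_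
    · exact (hu.continuous.mul (continuous_lap hu)).integrable_of_hasCompactSupport hc.mul_right
    · simp only
      nlinarith [sq_nonneg (u x + 4 * R ^ 2 * lap u x)]
  linarith [mul_le_mul_of_nonneg_left hgreen (by positivity : 0 ≤ 4 * R ^ 2)]

end Laplacian

section TestFunctions

variable {n : ℕ} {Ω : Set (EuclideanSpace ℝ (Fin n))} {u : EuclideanSpace ℝ (Fin n) → ℝ}

namespace TestFun

lemma contDiff_two (hu : TestFun Ω u) : ContDiff ℝ 2 u := contDiff_infty.1 hu.1 2

lemma integrable_sq (hu : TestFun Ω u) : Integrable fun x => u x ^ 2 :=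
  integrable_sq_of_hasCompactSupport hu.1.continuous hu.2.1

lemma setIntegral_sq_eq (hu : TestFun Ω u) : ∫ x in Ω, u x ^ 2 = ∫ x, u x ^ 2 :=
  setIntegral_eq_integral_of_forall_compl_eq_zero fun x hx => by
    rw [image_eq_zero_of_notMem_tsupport fun h => hx (hu.2.2.1 h), zero_pow two_ne_zero]

lemma setIntegral_lap_sq_eq (hu : TestFun Ω u) : ∫ x in Ω, lap u x ^ 2 = ∫ x, lap u x ^ 2 :=
  setIntegral_eq_integral_of_forall_compl_eq_zero fun x hx => by
    rw [lap_eq_zero_of_notMem_tsupport fun h => hx (hu.2.2.1 h), zero_pow two_ne_zero]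

lemma setIntegral_sq_pos (hu : TestFun Ω u) : 0 < ∫ x in Ω, u x ^ 2 := by
  obtain ⟨x, hx⟩ := Function.ne_iff.1 hu.2.2.2
  rw [hu.setIntegral_sq_eq]
  exact integral_pos_of_integrable_nonneg_nonzero (hu.1.continuous.pow 2) hu.integrable_sq
    (fun _ => sq_nonneg _) (pow_ne_zero 2 hx)

end TestFun

lemma exists_testFun (hΩ : IsOpen Ω) (hne : Ω.Nonempty) : ∃ u, TestFun Ω u := by
  obtain ⟨x, hx⟩ := hne
  obtain ⟨u, hsupp, hcs, hsm, -, hux⟩ := exists_contDiff_tsupport_subset (n := ⊤) (hΩ.mem_nhds hx)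
  exact ⟨u, hsm, hcs, hsupp, fun h0 => by simp [h0] at hux⟩

lemma exists_pos_mul_setIntegral_sq_le {i : Fin n} {R : ℝ} (hR : ∀ x ∈ Ω, |x i| ≤ R) :
    ∃ l > 0, ∀ u, TestFun Ω u → l * ∫ x in Ω, u x ^ 2 ≤ ∫ x in Ω, lap u x ^ 2 := by
  refine ⟨(16 * R ^ 4 + 1)⁻¹, by positivity, fun u hu => ?_⟩
  rw [inv_mul_le_iff₀ (by positivity), hu.setIntegral_sq_eq, hu.setIntegral_lap_sq_eq]
  have hpoincare := integral_sq_le_integral_lap_sq hu.contDiff_two hu.2.1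
    fun x hx => hR x (hu.2.2.1 hx)
  have hlap : 0 ≤ ∫ x, lap u x ^ 2 := integral_nonneg fun _ => sq_nonneg _
  linarith

end TestFunctions

section LightRegions

variable {n : ℕ} {Ω S : Set (EuclideanSpace ℝ (Fin n))} {A : ℝ}
  {u φ : EuclideanSpace ℝ (Fin n) → ℝ}

/-- The sets `S` over which the infimum in `Lam Ω α A` is taken: the possible positions of the
lighter of the two materials of the plate `Ω` when it occupies the volume `A`. -/
structure IsLightRegion (Ω : Set (EuclideanSpace ℝ (Fin n))) (A : ℝ)
    (S : Set (EuclideanSpace ℝ (Fin n))) : Prop where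
  measurableSet : MeasurableSet S
  subset : S ⊆ Ω
  volume_eq : volume S = ENNReal.ofReal A

lemma exists_isLightRegion_setIntegral_sq_le [NeZero n] (hΩ : MeasurableSet Ω)
    (hV : volume Ω ≠ ∞) (hu : TestFun Ω u) (hφ : AEStronglyMeasurable φ (volume.restrict Ω))
    (hφ01 : ∀ᵐ x ∂volume.restrict Ω, φ x ∈ Icc 0 1) (hφA : ∫ x in Ω, φ x = A) :
    ∃ S, IsLightRegion Ω A S ∧ ∫ x in S, u x ^ 2 ≤ ∫ x in Ω, φ x * u x ^ 2 := by
  have := isFiniteMeasure_restrict.2 hV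
  have hdiv : Divisible (volume.restrict Ω) :=
    divisible_of_absolutelyContinuous_addHaar Measure.restrict_le_self.absolutelyContinuous
  obtain ⟨T, hT, hTA, hle⟩ := hdiv.exists_setIntegral_le_integral_mul
    (hu.1.continuous.pow 2).measurable hu.integrable_sq.integrableOn hφ hφ01
  refine ⟨T ∩ Ω, ⟨hT.inter hΩ, inter_subset_right, ?_⟩, ?_⟩
  · rw [← Measure.restrict_apply hT, ← hφA, ← hTA, ofReal_measureReal]
  · rwa [← Measure.restrict_restrict hT]

lemma exists_isLightRegion_setIntegral_sq_lt [NeZero n] (hΩ : MeasurableSet Ω)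
    (hV : volume Ω ≠ ∞) (hu : TestFun Ω u) (hA0 : 0 ≤ A) (hA : A < volume.real Ω) :
    ∃ S, IsLightRegion Ω A S ∧ ∫ x in S, u x ^ 2 < ∫ x in Ω, u x ^ 2 := by
  have hVpos := hA0.trans_lt hA
  obtain ⟨S, hS, hle⟩ := exists_isLightRegion_setIntegral_sq_le (A := A) hΩ hV hu
    (φ := fun _ => A / volume.real Ω) aestronglyMeasurable_const
    (.of_forall fun _ => ⟨by positivity, (div_le_one hVpos).2 hA.le⟩)
    (by simp [mul_div_cancel₀ _ hVpos.ne'])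
  refine ⟨S, hS, hle.trans_lt ?_⟩
  rw [integral_const_mul]
  exact mul_lt_of_lt_one_left hu.setIntegral_sq_pos ((div_lt_one hVpos).2 hA)

end LightRegions

section GeneralizedEigenvalue

variable {n : ℕ} {Ω : Set (EuclideanSpace ℝ (Fin n))} {A l : ℝ}

lemma le_Lam_iff (hS : ∃ S, IsLightRegion Ω A S) (hu : ∃ u, TestFun Ω u) {α c : ℝ}
    (hα : 0 ≤ α) :
    c ≤ Lam Ω α A ↔ ∀ S, IsLightRegion Ω A S → ∀ u, TestFun Ω u →
      c * ∫ x in Ω, u x ^ 2 ≤ (∫ x in Ω, lap u x ^ 2) + α * ∫ x in S, u x ^ 2 := by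
  obtain ⟨S₀, hS₀⟩ := hS
  obtain ⟨u₀, hu₀⟩ := hu
  rw [Lam]
  refine Iff.trans (le_csInf_iff ⟨0, ?_⟩
    ⟨_, S₀, hS₀.measurableSet, hS₀.subset, hS₀.volume_eq, u₀, hu₀, rfl⟩) ⟨?_, ?_⟩
  · rintro r ⟨S, -, -, -, u, -, rfl⟩
    positivity
  · intro hc S hS u hu
    rw [← le_div_iff₀ hu.setIntegral_sq_pos]
    exact hc _ ⟨S, hS.measurableSet, hS.subset, hS.volume_eq, u, hu, rfl⟩
  · rintro hc r ⟨S, hSm, hSΩ, hSA, u, hu, rfl⟩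
    exact (le_div_iff₀ hu.setIntegral_sq_pos).2 (hc S ⟨hSm, hSΩ, hSA⟩ u hu)

lemma monotoneOn_Lam (hS : ∃ S, IsLightRegion Ω A S) (hu : ∃ u, TestFun Ω u) :
    MonotoneOn (fun α => Lam Ω α A) (Ici 0) := by
  intro α hα β hβ hαβ
  refine (le_Lam_iff hS hu hβ).2 fun S hS' u hu' => ?_
  refine ((le_Lam_iff hS hu hα).1 le_rfl S hS' u hu').trans ?_
  gcongr

lemma concaveOn_Lam (hS : ∃ S, IsLightRegion Ω A S) (hu : ∃ u, TestFun Ω u) :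
    ConcaveOn ℝ (Ici 0) (fun α => Lam Ω α A) := by
  refine ⟨convex_Ici 0, fun α hα β hβ s t hs ht hst => ?_⟩
  refine (le_Lam_iff hS hu (convex_Ici (0 : ℝ) hα hβ hs ht hst)).2 fun S hS' u hu' => ?_
  have hα_le := (le_Lam_iff hS hu hα).1 le_rfl S hS' u hu'
  have hβ_le := (le_Lam_iff hS hu hβ).1 le_rfl S hS' u hu'
  simp only [smul_eq_mul]
  linear_combination s * hα_le + t * hβ_le + (∫ x in Ω, lap u x ^ 2) * hst

lemma bddAbove_le_Lam {u : EuclideanSpace ℝ (Fin n) → ℝ} {S : Set (EuclideanSpace ℝ (Fin n))}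
    (hu : TestFun Ω u) (hS : IsLightRegion Ω A S)
    (hlt : ∫ x in S, u x ^ 2 < ∫ x in Ω, u x ^ 2) :
    BddAbove {α | 0 ≤ α ∧ α ≤ Lam Ω α A} := by
  refine ⟨(∫ x in Ω, lap u x ^ 2) / ((∫ x in Ω, u x ^ 2) - ∫ x in S, u x ^ 2), ?_⟩
  rintro α ⟨hα, hαLam⟩
  rw [le_div_iff₀ (sub_pos.2 hlt)]
  linarith [(le_Lam_iff ⟨S, hS⟩ ⟨u, hu⟩ hα).1 hαLam S hS u hu]

lemma exists_unique_pos_fixedPoint_Lam [NeZero n] (hΩ : MeasurableSet Ω) (hV : volume Ω ≠ ∞)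
    (hu : ∃ u, TestFun Ω u) (hA0 : 0 ≤ A) (hA : A < volume.real Ω) (hl : 0 < l)
    (hΩl : ∀ u, TestFun Ω u → l * ∫ x in Ω, u x ^ 2 ≤ ∫ x in Ω, lap u x ^ 2) :
    ∃ abar, (0 < abar ∧ Lam Ω abar A = abar) ∧ (∀ a, 0 < a → Lam Ω a A = a → a = abar) ∧
      IsGreatest {a | 0 ≤ a ∧ a ≤ Lam Ω a A} abar := by
  obtain ⟨u, hu'⟩ := hu
  obtain ⟨S, hS, hlt⟩ := exists_isLightRegion_setIntegral_sq_lt hΩ hV hu' hA0 hA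
  have hS_ex : ∃ S, IsLightRegion Ω A S := ⟨S, hS⟩
  have hu_ex : ∃ u, TestFun Ω u := ⟨u, hu'⟩
  have hLam0 : 0 < Lam Ω 0 A := hl.trans_le <|
    (le_Lam_iff hS_ex hu_ex le_rfl).2 fun S _ u hu => by simpa using hΩl u hu
  obtain ⟨abar, hfix, hgreatest⟩ := exists_fixedPoint_isGreatest_le_map
    (monotoneOn_Lam hS_ex hu_ex) hLam0.le (bddAbove_le_Lam hu' hS hlt)
  have hpos : 0 < abar := hgreatest.1.1.lt_of_ne fun h0 => by
    subst h0
    exact hLam0.ne' hfix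
  exact ⟨abar, ⟨hpos, hfix⟩, fun a ha hfa => eq_of_concaveOn_of_map_eq_self
    (concaveOn_Lam hS_ex hu_ex) hLam0 ha hpos hfa hfix, hgreatest⟩

end GeneralizedEigenvalue

section CompositeEigenvalue

variable {n : ℕ} {Ω S : Set (EuclideanSpace ℝ (Fin n))} {h H M A l b : ℝ}
  {ρ σ u f : EuclideanSpace ℝ (Fin n) → ℝ}

lemma Admissible.ae_mem_Icc (hρ : Admissible Ω h H M ρ) :
    ∀ᵐ x ∂volume.restrict Ω, ρ x ∈ Icc 0 H :=
  hρ.2.1.mono fun _ hx => ⟨hx.2.2.le, hx.2.1⟩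

lemma Admissible.integrable_mul (hρ : Admissible Ω h H M ρ) (hf : IntegrableOn f Ω) :
    IntegrableOn (fun x => ρ x * f x) Ω :=
  integrable_mul_of_ae_mem_Icc hf hρ.1.aestronglyMeasurable hρ.ae_mem_Icc

lemma Admissible.setIntegral_mul_sq_pos (hρ : Admissible Ω h H M ρ) (hu : TestFun Ω u) :
    0 < ∫ x in Ω, ρ x * u x ^ 2 := by
  have hnonneg : 0 ≤ᵐ[volume.restrict Ω] fun x => ρ x * u x ^ 2 :=
    hρ.ae_mem_Icc.mono fun x hx => mul_nonneg hx.1 (sq_nonneg _)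
  refine (integral_nonneg_of_ae hnonneg).lt_of_ne' fun hzero => hu.setIntegral_sq_pos.ne' ?_
  rw [integral_eq_zero_iff_of_nonneg_ae hnonneg
    (hρ.integrable_mul hu.integrable_sq.integrableOn)] at hzero
  refine integral_eq_zero_of_ae ?_
  filter_upwards [hzero, hρ.2.1] with x hx hρx
  exact (mul_eq_zero.1 hx).resolve_left hρx.2.2.ne'

lemma exists_admissible (hh : 0 ≤ h) (hH : h < H) (hA0 : 0 ≤ A) (hA : A < volume.real Ω)
    (hM : M = H * volume.real Ω - (H - h) * A) : ∃ ρ, Admissible Ω h H M ρ := by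
  have hVpos : 0 < volume.real Ω := hA0.trans_lt hA
  have hlt : h < M / volume.real Ω := by
    rw [lt_div_iff₀ hVpos, hM]
    linarith [mul_pos (sub_pos.2 hH) (sub_pos.2 hA)]
  have hle : M / volume.real Ω ≤ H := by
    rw [div_le_iff₀ hVpos, hM]
    linarith [mul_nonneg (sub_nonneg.2 hH.le) hA0]
  refine ⟨fun _ => M / volume.real Ω, measurable_const,
    .of_forall fun _ => ⟨hlt.le, hle, hh.trans_lt hlt⟩, ?_⟩
  simp [mul_div_cancel₀ _ hVpos.ne']

lemma Admissible.convexCombination (hh : 0 ≤ h) (hV : volume Ω ≠ ∞)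
    (hσ : Admissible Ω h H M σ) (hρ : Measurable ρ)
    (hρ_mem : ∀ᵐ x ∂volume.restrict Ω, ρ x ∈ Icc h H) (hρM : ∫ x in Ω, ρ x = M) {ε : ℝ}
    (hε : ε ∈ Ioc 0 1) : Admissible Ω h H M fun x => (1 - ε) * ρ x + ε * σ x := by
  have := isFiniteMeasure_restrict.2 hV
  have hε' : 0 ≤ 1 - ε := sub_nonneg.2 hε.2
  refine ⟨(hρ.const_mul _).add (hσ.1.const_mul _), ?_, ?_⟩
  · filter_upwards [hρ_mem, hσ.2.1] with x hρx hσx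
    have hconv := convex_Icc h H hρx ⟨hσx.1, hσx.2.1⟩ hε' hε.1.le (by ring)
    exact ⟨hconv.1, hconv.2, add_pos_of_nonneg_of_pos (mul_nonneg hε' (hh.trans hρx.1))
      (mul_pos hε.1 hσx.2.2)⟩
  · have hρi : IntegrableOn ρ Ω := .of_mem_Icc h H hρ.aemeasurable hρ_mem
    have hσi : IntegrableOn σ Ω := by
      simpa using hσ.integrable_mul (integrable_const (1 : ℝ))
    rw [integral_add (hρi.const_mul _) (hσi.const_mul _), integral_const_mul, integral_const_mul,
      hρM, hσ.2.2]
    ring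

lemma le_Theta_iff (hρ : ∃ ρ, Admissible Ω h H M ρ) (hu : ∃ u, TestFun Ω u) :
    b ≤ Theta Ω h H M ↔ ∀ ρ, Admissible Ω h H M ρ → ∀ u, TestFun Ω u →
      b * ∫ x in Ω, ρ x * u x ^ 2 ≤ ∫ x in Ω, lap u x ^ 2 := by
  obtain ⟨ρ₀, hρ₀⟩ := hρ
  obtain ⟨u₀, hu₀⟩ := hu
  rw [Theta]
  refine Iff.trans (le_csInf_iff ⟨0, ?_⟩ ⟨_, ρ₀, hρ₀, u₀, hu₀, rfl⟩) ⟨?_, ?_⟩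
  · rintro r ⟨ρ, hρ, u, hu, rfl⟩
    exact div_nonneg (integral_nonneg fun _ => sq_nonneg _) (hρ.setIntegral_mul_sq_pos hu).le
  · intro hb ρ hρ u hu
    rw [← le_div_iff₀ (hρ.setIntegral_mul_sq_pos hu)]
    exact hb _ ⟨ρ, hρ, u, hu, rfl⟩
  · rintro hb r ⟨ρ, hρ, u, hu, rfl⟩
    exact (le_div_iff₀ (hρ.setIntegral_mul_sq_pos hu)).2 (hb ρ hρ u hu)

lemma Theta_pos (hH : 0 < H) (hρ : ∃ ρ, Admissible Ω h H M ρ) (hu : ∃ u, TestFun Ω u)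
    (hl : 0 < l) (hΩl : ∀ u, TestFun Ω u → l * ∫ x in Ω, u x ^ 2 ≤ ∫ x in Ω, lap u x ^ 2) :
    0 < Theta Ω h H M := by
  refine (div_pos hl hH).trans_le ((le_Theta_iff hρ hu).2 fun ρ hρ u hu => ?_)
  have hle : ∫ x in Ω, ρ x * u x ^ 2 ≤ H * ∫ x in Ω, u x ^ 2 := by
    rw [← integral_const_mul]
    exact integral_mono_ae (hρ.integrable_mul hu.integrable_sq.integrableOn)
      (hu.integrable_sq.integrableOn.const_mul H)
      (hρ.ae_mem_Icc.mono fun x hx => mul_le_mul_of_nonneg_right hx.2 (sq_nonneg _))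
  calc l / H * ∫ x in Ω, ρ x * u x ^ 2 ≤ l / H * (H * ∫ x in Ω, u x ^ 2) := by gcongr
    _ = l * ∫ x in Ω, u x ^ 2 := by rw [← mul_assoc, div_mul_cancel₀ l hH.ne']
    _ ≤ ∫ x in Ω, lap u x ^ 2 := hΩl u hu

lemma mul_setIntegral_mul_sq_le_of_le_Theta (hh : 0 ≤ h) (hV : volume Ω ≠ ∞)
    (hσ : ∃ σ, Admissible Ω h H M σ) (hb : b ≤ Theta Ω h H M) (hρ : Measurable ρ)
    (hρ_mem : ∀ᵐ x ∂volume.restrict Ω, ρ x ∈ Icc h H) (hρM : ∫ x in Ω, ρ x = M)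
    (hu : TestFun Ω u) : b * ∫ x in Ω, ρ x * u x ^ 2 ≤ ∫ x in Ω, lap u x ^ 2 := by
  obtain ⟨σ, hσ⟩ := hσ
  have hρu : IntegrableOn (fun x => ρ x * u x ^ 2) Ω :=
    integrable_mul_of_ae_mem_Icc hu.integrable_sq.integrableOn hρ.aestronglyMeasurable
      (hρ_mem.mono fun x hx => ⟨hh.trans hx.1, hx.2⟩)
  have hσu : IntegrableOn (fun x => σ x * u x ^ 2) Ω :=
    hσ.integrable_mul hu.integrable_sq.integrableOn
  have hmix : ∀ ε ∈ Ioc (0 : ℝ) 1, b * ((1 - ε) * (∫ x in Ω, ρ x * u x ^ 2) +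
      ε * ∫ x in Ω, σ x * u x ^ 2) ≤ ∫ x in Ω, lap u x ^ 2 := by
    intro ε hε
    have hle := (le_Theta_iff ⟨σ, hσ⟩ ⟨u, hu⟩).1 hb _
      (hσ.convexCombination hh hV hρ hρ_mem hρM hε) u hu
    simp only [add_mul, mul_assoc] at hle
    rwa [integral_add (hρu.const_mul _) (hσu.const_mul _), integral_const_mul,
      integral_const_mul] at hle
  have hlim : Tendsto (fun ε : ℝ => b * ((1 - ε) * (∫ x in Ω, ρ x * u x ^ 2) +
      ε * ∫ x in Ω, σ x * u x ^ 2)) (𝓝[>] 0) (𝓝 (b * ∫ x in Ω, ρ x * u x ^ 2)) := by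
    refine tendsto_nhdsWithin_of_tendsto_nhds (Continuous.tendsto' (by fun_prop) _ _ (by simp))
  exact le_of_tendsto hlim (mem_of_superset (Ioc_mem_nhdsGT one_pos) hmix)

/-- The density of a plate made of the material of density `h` on `S` and of the material of
density `H` elsewhere. -/
def twoPhaseDensity (h H : ℝ) (S : Set (EuclideanSpace ℝ (Fin n))) :
    EuclideanSpace ℝ (Fin n) → ℝ :=
  fun x => H - (H - h) * S.indicator 1 x

lemma measurable_twoPhaseDensity (hS : MeasurableSet S) : Measurable (twoPhaseDensity h H S) :=
  measurable_const.sub ((measurable_one.indicator hS).const_mul _)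

lemma twoPhaseDensity_mem_Icc (hH : h ≤ H) (x : EuclideanSpace ℝ (Fin n)) :
    twoPhaseDensity h H S x ∈ Icc h H := by
  by_cases hx : x ∈ S <;> simp [twoPhaseDensity, hx, hH]

lemma setIntegral_twoPhaseDensity_mul (hS : MeasurableSet S) (hSΩ : S ⊆ Ω)
    (hf : IntegrableOn f Ω) : ∫ x in Ω, twoPhaseDensity h H S x * f x =
      H * (∫ x in Ω, f x) - (H - h) * ∫ x in S, f x := by
  have hsplit (x) : twoPhaseDensity h H S x * f x = H * f x - (H - h) * S.indicator f x := by
    by_cases hx : x ∈ S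
    · simp [twoPhaseDensity, hx, sub_mul]
    · simp [twoPhaseDensity, hx]
  simp only [hsplit]
  rw [integral_sub (hf.const_mul H) ((hf.indicator hS).const_mul _), integral_const_mul,
    integral_const_mul, setIntegral_indicator hS, inter_eq_right.2 hSΩ]

lemma IsLightRegion.setIntegral_twoPhaseDensity (hS : IsLightRegion Ω A S) (hV : volume Ω ≠ ∞)
    (hA : 0 ≤ A) :
    ∫ x in Ω, twoPhaseDensity h H S x = H * volume.real Ω - (H - h) * A := by
  have hSA : volume.real S = A := by rw [Measure.real, hS.volume_eq, toReal_ofReal hA]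
  simpa [hSA] using setIntegral_twoPhaseDensity_mul (h := h) (H := H) hS.measurableSet hS.subset
    (integrableOn_const (C := (1 : ℝ)) hV)

lemma Admissible.exists_isLightRegion_setIntegral_mul_sq_le [NeZero n] (hΩ : MeasurableSet Ω)
    (hV : volume Ω ≠ ∞) (hH : h < H) (hM : M = H * volume.real Ω - (H - h) * A)
    (hρ : Admissible Ω h H M ρ) (hu : TestFun Ω u) :
    ∃ S, IsLightRegion Ω A S ∧
      ∫ x in Ω, ρ x * u x ^ 2 ≤ H * (∫ x in Ω, u x ^ 2) - (H - h) * ∫ x in S, u x ^ 2 := by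
  have := isFiniteMeasure_restrict.2 hV
  have hHh : 0 < H - h := sub_pos.2 hH
  have hρi : IntegrableOn ρ Ω := by simpa using hρ.integrable_mul (integrable_const (1 : ℝ))
  have hφ01 : ∀ᵐ x ∂volume.restrict Ω, (H - ρ x) / (H - h) ∈ Icc 0 1 := by
    filter_upwards [hρ.2.1] with x hx
    exact ⟨div_nonneg (sub_nonneg.2 hx.2.1) hHh.le, (div_le_one hHh).2 (sub_le_sub_left hx.1 H)⟩
  have hφA : ∫ x in Ω, (H - ρ x) / (H - h) = A := by
    rw [integral_div, integral_sub (integrable_const H) hρi, hρ.2.2, hM, div_eq_iff hHh.ne',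
      setIntegral_const, smul_eq_mul]
    ring
  obtain ⟨S, hS, hle⟩ := exists_isLightRegion_setIntegral_sq_le hΩ hV hu
    ((hρ.1.const_sub H).div_const _).aestronglyMeasurable hφ01 hφA
  have hφu : ∫ x in Ω, (H - ρ x) / (H - h) * u x ^ 2 =
      (H * (∫ x in Ω, u x ^ 2) - ∫ x in Ω, ρ x * u x ^ 2) / (H - h) := by
    rw [← integral_const_mul, ← integral_sub (hu.integrable_sq.integrableOn.const_mul H)
      (hρ.integrable_mul hu.integrable_sq.integrableOn), ← integral_div]
    exact integral_congr_ae (.of_forall fun x => by ring)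
  rw [hφu, le_div_iff₀ hHh] at hle
  exact ⟨S, hS, by linarith⟩

lemma le_Theta_iff_forall_isLightRegion [NeZero n] (hΩ : MeasurableSet Ω) (hV : volume Ω ≠ ∞)
    (hh : 0 ≤ h) (hH : h < H) (hA : 0 ≤ A) (hM : M = H * volume.real Ω - (H - h) * A)
    (hρ : ∃ ρ, Admissible Ω h H M ρ) (hu : ∃ u, TestFun Ω u) (hb : 0 ≤ b) :
    b ≤ Theta Ω h H M ↔ ∀ S, IsLightRegion Ω A S → ∀ u, TestFun Ω u →
      b * (H * (∫ x in Ω, u x ^ 2) - (H - h) * ∫ x in S, u x ^ 2) ≤ ∫ x in Ω, lap u x ^ 2 := by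
  refine ⟨fun hbΘ S hS u hu => ?_, fun hlight => (le_Theta_iff hρ hu).2 fun ρ hρ u hu => ?_⟩
  · rw [← setIntegral_twoPhaseDensity_mul hS.measurableSet hS.subset hu.integrable_sq.integrableOn]
    exact mul_setIntegral_mul_sq_le_of_le_Theta hh hV hρ hbΘ
      (measurable_twoPhaseDensity hS.measurableSet) (.of_forall (twoPhaseDensity_mem_Icc hH.le))
      ((hS.setIntegral_twoPhaseDensity hV hA).trans hM.symm) hu
  · obtain ⟨S, hS, hle⟩ := hρ.exists_isLightRegion_setIntegral_mul_sq_le hΩ hV hH hM hu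
    exact (mul_le_mul_of_nonneg_left hle hb).trans (hlight S hS u hu)

lemma mul_Theta_le_Lam [NeZero n] (hΩ : MeasurableSet Ω) (hV : volume Ω ≠ ∞)
    (hh : 0 ≤ h) (hH : h < H) (hA : 0 ≤ A) (hM : M = H * volume.real Ω - (H - h) * A)
    (hρ : ∃ ρ, Admissible Ω h H M ρ) (hu : ∃ u, TestFun Ω u) (hS : ∃ S, IsLightRegion Ω A S)
    (hΘ : 0 ≤ Theta Ω h H M) :
    H * Theta Ω h H M ≤ Lam Ω (H * Theta Ω h H M) A := by
  refine (le_Lam_iff hS hu (mul_nonneg (hh.trans hH.le) hΘ)).2 fun S hS u hu' => ?_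
  have hle := (le_Theta_iff_forall_isLightRegion hΩ hV hh hH hA hM hρ hu hΘ).1 le_rfl S hS u hu'
  have hSu : 0 ≤ ∫ x in S, u x ^ 2 := integral_nonneg fun _ => sq_nonneg _
  linarith [mul_nonneg (mul_nonneg hh hΘ) hSu]

lemma le_mul_Theta_of_le_Lam [NeZero n] (hΩ : MeasurableSet Ω) (hV : volume Ω ≠ ∞)
    (hH : 0 < H) (hA : 0 ≤ A) (hM : M = H * volume.real Ω - H * A)
    (hρ : ∃ ρ, Admissible Ω 0 H M ρ) (hu : ∃ u, TestFun Ω u) {a : ℝ} (ha : 0 ≤ a)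
    (haLam : a ≤ Lam Ω a A) : a ≤ H * Theta Ω 0 H M := by
  rw [← div_le_iff₀' hH]
  refine (le_Theta_iff_forall_isLightRegion hΩ hV le_rfl hH hA (by rwa [sub_zero]) hρ hu
    (div_nonneg ha hH.le)).2 fun S hS u hu' => ?_
  have hle := (le_Lam_iff ⟨S, hS⟩ hu ha).1 haLam S hS u hu'
  rw [sub_zero, ← mul_sub, ← mul_assoc, div_mul_cancel₀ a hH.ne']
  linarith

end CompositeEigenvalue

theorem statement17_general {n : ℕ} (Ω : Set (EuclideanSpace ℝ (Fin n)))
    (hne : Ω.Nonempty) (hΩo : IsOpen Ω) (hV : volume Ω ≠ ∞)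
    (i : Fin n) (R : ℝ) (hslab : ∀ x ∈ Ω, |x i| ≤ R)
    (h H M : ℝ) (hh : 0 ≤ h) (hH : h < H) (hM2 : M ≤ H * (volume Ω).toReal)
    (Θ α A : ℝ) (hΘ : Θ = Theta Ω h H M) (hα : α = (H - h) * Θ)
    (hA : A = (H * (volume Ω).toReal - M) / (H - h)) (hA1 : A < (volume Ω).toReal) :
    ∃ abar : ℝ, (0 < abar ∧ Lam Ω abar A = abar) ∧
      (∀ a : ℝ, 0 < a → Lam Ω a A = a → a = abar) ∧
      0 < α ∧ α ≤ abar ∧ (α = abar ↔ h = 0) := by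
  have := i.neZero
  have hHh : 0 < H - h := sub_pos.2 hH
  have hA0 : 0 ≤ A := hA ▸ div_nonneg (sub_nonneg.2 hM2) hHh.le
  have hM : M = H * volume.real Ω - (H - h) * A := by
    rw [hA, mul_div_cancel₀ _ hHh.ne']
    exact (_root_.sub_sub_cancel _ _).symm
  have hρ := exists_admissible hh hH hA0 hA1 hM
  have hu := exists_testFun hΩo hne
  obtain ⟨l, hl, hΩl⟩ := exists_pos_mul_setIntegral_sq_le hslab
  obtain ⟨S, hS, -⟩ :=
    exists_isLightRegion_setIntegral_sq_lt hΩo.measurableSet hV hu.choose_spec hA0 hA1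
  obtain ⟨abar, hfix, huniq, hgreatest⟩ :=
    exists_unique_pos_fixedPoint_Lam hΩo.measurableSet hV hu hA0 hA1 hl hΩl
  have hΘpos : 0 < Θ := hΘ ▸ Theta_pos (hh.trans_lt hH) hρ hu hl hΩl
  have hHΘ : H * Θ ≤ abar := hgreatest.2 ⟨mul_nonneg (hh.trans hH.le) hΘpos.le,
    hΘ ▸ mul_Theta_le_Lam hΩo.measurableSet hV hh hH hA0 hM hρ hu ⟨S, hS⟩ (hΘ ▸ hΘpos.le)⟩
  have hα_eq : α = H * Θ - h * Θ := by rw [hα, sub_mul]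
  refine ⟨abar, hfix, huniq, hα ▸ mul_pos hHh hΘpos, ?_, fun heq => ?_, ?_⟩
  · linarith [mul_nonneg hh hΘpos.le]
  · exact hh.antisymm' (nonpos_of_mul_nonpos_left (by linarith) hΘpos)
  · rintro rfl
    have hle : abar ≤ H * Θ := hΘ ▸ le_mul_Theta_of_le_Lam hΩo.measurableSet hV hH hA0
      (by rwa [sub_zero] at hM) hρ hu hfix.1.le hfix.2.ge
    linarith

/-- With `Θ := Θ(h,H,M)`, `α := (H−h)Θ` and `A := (H|Ω|−M)/(H−h)`, if `A < |Ω|` then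
`0 < α ≤ ᾱ(A)` where `ᾱ(A)` is the unique positive fixed point of `Λ(·,A)`;
moreover `α = ᾱ(A)` if and only if `h = 0`. -/
theorem statement17 {n : ℕ} (hn : 2 ≤ n) (Ω : Set (EuclideanSpace ℝ (Fin n)))
    (hne : Ω.Nonempty) (hΩo : IsOpen Ω) (hΩb : Bornology.IsBounded Ω)
    (h H M : ℝ) (hh : 0 ≤ h) (hH : h < H)
    (hM1 : h * (volume Ω).toReal ≤ M) (hM2 : M ≤ H * (volume Ω).toReal)
    (Θ α A : ℝ) (hΘ : Θ = Theta Ω h H M) (hα : α = (H - h) * Θ)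
    (hA : A = (H * (volume Ω).toReal - M) / (H - h)) (hA1 : A < (volume Ω).toReal) :
    ∃ abar : ℝ, (0 < abar ∧ Lam Ω abar A = abar) ∧
      (∀ a : ℝ, 0 < a → Lam Ω a A = a → a = abar) ∧
      0 < α ∧ α ≤ abar ∧ (α = abar ↔ h = 0) := by
  obtain ⟨R, -, hR⟩ := hΩb.exists_pos_norm_le
  exact statement17_general Ω hne hΩo hΩb.measure_lt_top.ne ⟨0, by lia⟩ R
    (fun x hx => (PiLp.norm_apply_le x _).trans (hR x hx)) h H M hh hH hM2 Θ α A hΘ hα hA hA1
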